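/- Let D be a unicycle digraph possessing two distinct kernels K_1 and K_2. Then the unique cycle of D is a directed circuit of even length, the vertices along this circuit alternate between belonging to K_1 and belonging to K_2 (every circuit vertex lies in exactly one of the two kernels, and consecutive circuit vertices lie in different kernels), and in each kernel the circuit vertices it contains form every other vertex of the circuit. -/

import Mathlib

/-- A digraph on the vertex set `Fin n`: a loopless Boolean arc relation (no multiple arcs
in the same direction, but the two opposite arcs may both be present). -/
structure FinDigraph (n : ℕ) where
  arc : Fin n → Fin n → Bool
  loopless : ∀ v, arc v v = false

/-- The number of arcs of a digraph. -/
def arcCount {n : ℕ} (D : FinDigraph n) : ℕ :=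
  (Finset.univ.filter fun p : Fin n × Fin n => D.arc p.1 p.2 = true).card

/-- Weak connectivity: the underlying undirected graph is connected. -/
def WeaklyConnected {n : ℕ} (D : FinDigraph n) : Prop :=
  (SimpleGraph.fromRel fun v w => D.arc v w = true).Connected

/-- A unicycle digraph: weakly connected with at most one cycle (a cycle being a closed
undirected path of length ≥ 2, a pair of opposite arcs counting as a cycle of length 2).
For a weakly connected digraph this is equivalent to having at most as many arcs as
vertices. -/
def IsUnicycle {n : ℕ} (D : FinDigraph n) : Prop :=
  WeaklyConnected D ∧ arcCount D ≤ n

/-- A unicircuit digraph: a unicycle digraph whose cycle, if it exists (i.e. when the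
number of arcs equals the number of vertices), is a directed circuit (equivalently, there
is a directed closed walk). -/
def IsUnicircuit {n : ℕ} (D : FinDigraph n) : Prop :=
  IsUnicycle D ∧
    (arcCount D = n → ∃ v, Relation.TransGen (fun a b => D.arc a b = true) v v)

/-- A kernel of a digraph: a nonempty independent dominating set of vertices. -/
def IsKernel {n : ℕ} (D : FinDigraph n) (K : Finset (Fin n)) : Prop :=
  K.Nonempty ∧ (∀ a ∈ K, ∀ b ∈ K, D.arc a b = false) ∧
    (∀ a, a ∉ K → ∃ b ∈ K, D.arc a b = true)

/-- `v : ZMod m → Fin n` parametrizes a cycle of the digraph `D`: `m ≥ 2`, the vertices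
`v 0, …, v (m-1)` are pairwise distinct, consecutive vertices are joined by an arc in at
least one direction, and in the degenerate case `m = 2` both opposite arcs are present
(a pair of opposite arcs counts as a cycle of length 2). -/
def IsCycleMap {n : ℕ} (D : FinDigraph n) (m : ℕ) (v : ZMod m → Fin n) : Prop :=
  2 ≤ m ∧ Function.Injective v ∧
  (∀ i, D.arc (v i) (v (i + 1)) = true ∨ D.arc (v (i + 1)) (v i) = true) ∧
  (m = 2 → D.arc (v 0) (v 1) = true ∧ D.arc (v 1) (v 0) = true)

theorem aux_sub {n : ℕ} (D : FinDigraph n) (hD : IsUnicycle D) (m : ℕ) (v : ZMod m → Fin n)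
    (hv : IsCycleMap D m v) (m' : ℕ) (v' : ZMod m' → Fin n) (hv' : IsCycleMap D m' v') :
    Set.range v' ⊆ Set.range v := by
  classical
  obtain ⟨hconn, hcard⟩ := hD
  obtain ⟨hm, hinj, hadj, h2⟩ := hv
  obtain ⟨hm', hinj', hadj', h2'⟩ := hv'
  unfold WeaklyConnected at hconn
  set G := SimpleGraph.fromRel fun v w => D.arc v w = true with hG
  let d : Fin n → ℕ := fun x => G.dist x (v 0)
  have key : ∀ x, ∃ y, (∀ i, v i = x → y = v (i+1)) ∧ (x ∉ Set.range v → d y < d x) ∧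
      (D.arc x y = true ∨ D.arc y x = true) := by
    intro x
    by_cases hx : x ∈ Set.range v
    · obtain ⟨i, rfl⟩ := hx
      refine ⟨v (i+1), ?_, ?_, hadj i⟩
      · intro j hj
        rw [hinj hj]
      · intro h
        exact absurd ⟨i, rfl⟩ h
    · have hne : x ≠ v 0 := fun h => hx ⟨0, h.symm⟩
      obtain ⟨p, hp⟩ := (hconn.preconnected x (v 0)).exists_walk_length_eq_dist
      cases p with
      | nil => exact absurd rfl hne
      | @cons _ y _ hxy q =>
        refine ⟨y, ?_, ?_, ?_⟩
        · intro i hi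
          exact absurd ⟨i, hi⟩ hx
        · intro _
          have h3 := SimpleGraph.dist_le q
          simp only [SimpleGraph.Walk.length_cons] at hp
          show G.dist y (v 0) < G.dist x (v 0)
          omega
        · rw [hG, SimpleGraph.fromRel_adj] at hxy
          exact hxy.2
  choose s hs1 hs2 hs3 using key
  have hsA : ∀ x, x ∈ Set.range v → s x ∈ Set.range v := by
    rintro x ⟨i, rfl⟩
    exact ⟨i+1, (hs1 _ i rfl).symm⟩
  have hswap : ∀ x y, s x = y → s y = x → D.arc x y = true ∧ D.arc y x = true := by
    intro x y hxy hyx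
    by_cases hx : x ∈ Set.range v
    · obtain ⟨i, rfl⟩ := hx
      have e1 := hs1 _ i rfl
      rw [hxy] at e1
      subst e1
      have e2 := hs1 _ (i+1) rfl
      rw [hyx] at e2
      have e3 := hinj e2
      have e4 : ((2:ℕ) : ZMod m) = 0 := by
        push_cast
        linear_combination -e3
      rw [ZMod.natCast_eq_zero_iff] at e4
      have hm2 : m = 2 := le_antisymm (Nat.le_of_dvd (by norm_num) e4) hm
      have := h2 hm2
      subst hm2
      have hi : i = 0 ∨ i = 1 := by
        clear * -
        revert i; decide
      rcases hi with rfl | rfl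
      · simpa using this
      · have h11 : (1 : ZMod 2) + 1 = 0 := by decide
        rw [h11]
        exact this.symm
    · have hy : y ∉ Set.range v := fun h => hx (hyx ▸ hsA y h)
      have a1 := hs2 x hx
      have a2 := hs2 y hy
      rw [hxy] at a1
      rw [hyx] at a2
      omega
  let e : Fin n → Fin n × Fin n := fun x => if D.arc x (s x) = true then (x, s x) else (s x, x)
  have hemem : ∀ x, e x ∈ Finset.univ.filter fun p : Fin n × Fin n => D.arc p.1 p.2 = true := by
    intro x
    have := hs3 x
    simp only [e, Finset.mem_filter, Finset.mem_univ, true_and]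
    split_ifs with h
    · exact h
    · simpa [h] using this
  have heinj : Function.Injective e := by
    intro x y hxy
    simp only [e] at hxy
    split_ifs at hxy with ha hb hb <;> simp only [Prod.mk.injEq] at hxy
    · exact hxy.1
    · have := hswap x y hxy.2 hxy.1.symm
      rw [← hxy.1] at hb
      exact absurd this.2 hb
    · have := hswap x y hxy.1 hxy.2.symm
      rw [hxy.1] at ha
      exact absurd this.1 ha
    · exact hxy.2
  have himg : Finset.univ.image e =
      Finset.univ.filter fun p : Fin n × Fin n => D.arc p.1 p.2 = true := by
    apply Finset.eq_of_subset_of_card_le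
    · intro p hp
      obtain ⟨x, _, rfl⟩ := Finset.mem_image.1 hp
      exact hemem x
    · rw [Finset.card_image_of_injective _ heinj, Finset.card_univ, Fintype.card_fin]
      exact hcard
  have hsurj : ∀ a b, D.arc a b = true → ∃ x, e x = (a, b) := by
    intro a b hab
    have : (a, b) ∈ Finset.univ.image e := by
      rw [himg]; simp [hab]
    obtain ⟨x, _, hx⟩ := Finset.mem_image.1 this
    exact ⟨x, hx⟩
  have harc : ∀ a b, D.arc a b = true → s a = b ∨ s b = a := by
    intro a b hab
    obtain ⟨x, hx⟩ := hsurj a b hab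
    simp only [e] at hx
    split_ifs at hx <;> simp only [Prod.mk.injEq] at hx <;> obtain ⟨rfl, rfl⟩ := hx <;> simp
  have hboth : ∀ a b, D.arc a b = true → D.arc b a = true → s a = b ∧ s b = a := by
    intro a b hab hba
    have hne : a ≠ b := by
      rintro rfl
      simp [D.loopless] at hab
    obtain ⟨x, hx⟩ := hsurj a b hab
    obtain ⟨y, hy⟩ := hsurj b a hba
    have hxy : x ≠ y := by
      rintro rfl
      rw [hx] at hy
      simp only [Prod.mk.injEq] at hy
      exact hne hy.1
    simp only [e] at hx hy
    split_ifs at hx hy <;> simp only [Prod.mk.injEq] at hx hy <;> grind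
  -- main
  by_contra hcon
  have : NeZero m' := ⟨by omega⟩
  have hne : (Finset.univ.filter fun i : ZMod m' => v' i ∉ Set.range v).Nonempty := by
    rw [Set.not_subset] at hcon
    obtain ⟨_, ⟨i, rfl⟩, hi⟩ := hcon
    exact ⟨i, by simpa using hi⟩
  obtain ⟨i, hi, hmax⟩ := Finset.exists_max_image _ (fun i => d (v' i)) hne
  have hiA : v' i ∉ Set.range v := (Finset.mem_filter.1 hi).2
  have hno : ∀ j, s (v' j) ≠ v' i := by
    intro j hj
    by_cases hjA : v' j ∈ Set.range v
    · exact hiA (hj ▸ hsA _ hjA)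
    · have a1 := hs2 _ hjA
      rw [hj] at a1
      have a2 := hmax j (Finset.mem_filter.2 ⟨Finset.mem_univ _, hjA⟩)
      omega
  have hnb : ∀ j, (D.arc (v' i) (v' j) = true ∨ D.arc (v' j) (v' i) = true) →
      s (v' i) = v' j := by
    intro j hj
    rcases hj with hj | hj
    · rcases harc _ _ hj with h | h
      · exact h
      · exact absurd h (hno j)
    · rcases harc _ _ hj with h | h
      · exact absurd h (hno j)
      · exact h
  have b1 := hnb (i+1) (hadj' i)
  have b2 := hnb (i-1) (by
    have := hadj' (i-1)
    rw [sub_add_cancel] at this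
    exact this.symm)
  have b3 := hinj' (b1.symm.trans b2)
  have e4 : ((2:ℕ) : ZMod m') = 0 := by
    push_cast
    linear_combination b3
  rw [ZMod.natCast_eq_zero_iff] at e4
  have hm2 : m' = 2 := le_antisymm (Nat.le_of_dvd (by norm_num) e4) hm'
  have hh := h2' hm2
  subst hm2
  have hb := hboth _ _ hh.1 hh.2
  have hi : i = 0 ∨ i = 1 := by
    clear * -
    revert i; decide
  rcases hi with rfl | rfl
  · exact hno 1 hb.2
  · exact hno 0 hb.1

/-- If a unicycle digraph has two distinct kernels `K₁` and `K₂`, then its unique cycle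
is a directed circuit of even length, every circuit vertex lies in exactly one of the two
kernels, and consecutive circuit vertices lie in different kernels (so in each kernel the
circuit vertices form every other vertex of the circuit). -/
theorem stmt13 (n : ℕ) (D : FinDigraph n) (hD : IsUnicycle D)
    (K₁ K₂ : Finset (Fin n)) (h1 : IsKernel D K₁) (h2 : IsKernel D K₂) (hne : K₁ ≠ K₂) :
    ∃ (m : ℕ) (v : ZMod m → Fin n),
      IsCycleMap D m v ∧
      Even m ∧
      (∀ i, D.arc (v i) (v (i + 1)) = true) ∧
      (∀ (m' : ℕ) (v' : ZMod m' → Fin n), IsCycleMap D m' v' →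
        Set.range v' = Set.range v) ∧
      (∀ i, (v i ∈ K₁ ∧ v i ∉ K₂) ∨ (v i ∈ K₂ ∧ v i ∉ K₁)) ∧
      (∀ i, v i ∈ K₁ ↔ v (i + 1) ∈ K₂) := by
  classical
  let P : Fin n → Prop := fun x => (x ∈ K₁ ∧ x ∉ K₂) ∨ (x ∈ K₂ ∧ x ∉ K₁)
  have hstep : ∀ x : {x // P x}, ∃ y : {x // P x}, D.arc x.1 y.1 = true ∧
      (x.1 ∈ K₁ ↔ y.1 ∈ K₂) ∧ (x.1 ∈ K₁ ↔ y.1 ∉ K₁) := by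
    rintro ⟨x, ⟨ha, hb⟩ | ⟨ha, hb⟩⟩
    · obtain ⟨y, hy, hxy⟩ := h2.2.2 x hb
      have hy1 : y ∉ K₁ := fun h => by
        have := h1.2.1 x ha y h
        simp [hxy] at this
      exact ⟨⟨y, Or.inr ⟨hy, hy1⟩⟩, hxy, by simp [ha, hy], by simp [ha, hy1]⟩
    · obtain ⟨y, hy, hxy⟩ := h1.2.2 x hb
      have hy1 : y ∉ K₂ := fun h => by
        have := h2.2.1 x ha y h
        simp [hxy] at this
      exact ⟨⟨y, Or.inl ⟨hy, hy1⟩⟩, hxy, by simp [hb, hy1], by simp [hb, hy]⟩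
  choose f hf1 hf2 hf3 using hstep
  have hx0 : ∃ x, P x := by
    by_contra hcon
    push Not at hcon
    apply hne
    ext x
    have := hcon x
    simp only [P] at this
    tauto
  obtain ⟨x0, hx0⟩ := hx0
  obtain ⟨p, hp⟩ : ∃ p, p ∈ Function.periodicPts f := by
    obtain ⟨i, j, hij, h⟩ := Finite.exists_ne_map_eq_of_infinite (fun k : ℕ => f^[k] ⟨x0, hx0⟩)
    wlog hlt : i < j generalizing i j
    · exact this j i hij.symm h.symm (by omega)
    refine ⟨f^[i] ⟨x0, hx0⟩, j - i, by omega, ?_⟩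
    show f^[j-i] _ = _
    rw [← Function.iterate_add_apply, Nat.sub_add_cancel hlt.le]
    exact h.symm
  have hmpos := Function.minimalPeriod_pos_of_mem_periodicPts hp
  have hper : f^[Function.minimalPeriod f p] p = p := Function.iterate_minimalPeriod
  have hmod : ∀ k, f^[k % Function.minimalPeriod f p] p = f^[k] p :=
    fun k => Function.iterate_mod_minimalPeriod_eq
  have hinjOn : ∀ a b, a < Function.minimalPeriod f p → b < Function.minimalPeriod f p →
      f^[a] p = f^[b] p → a = b := fun a b ha hb h =>
    (Function.iterate_eq_iterate_iff_of_lt_minimalPeriod ha hb).1 h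
  generalize Function.minimalPeriod f p = m at *
  have hpar : ∀ k, ((f^[k] p).1 ∈ K₁ ↔ (Even k ↔ p.1 ∈ K₁)) := by
    intro k
    induction k with
    | zero => simp
    | succ k ih =>
      have := hf3 (f^[k] p)
      rw [Function.iterate_succ_apply', Nat.even_add_one]
      tauto
  have heven : Even m := by
    have := hpar m
    rw [hper] at this
    tauto
  have hm2 : 2 ≤ m := by
    obtain ⟨r, hr⟩ := heven
    omega
  have : NeZero m := ⟨by omega⟩
  have : Fact (1 < m) := ⟨by omega⟩
  have hsucc : ∀ i : ZMod m, f^[(i+1).val] p = f (f^[i.val] p) := by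
    intro i
    rw [ZMod.val_add, hmod, ZMod.val_one, Function.iterate_succ_apply']
  let v : ZMod m → Fin n := fun i => (f^[i.val] p).1
  have harc : ∀ i, D.arc (v i) (v (i + 1)) = true := by
    intro i
    simp only [v, hsucc]
    exact hf1 _
  have hcyc : IsCycleMap D m v := by
    refine ⟨hm2, ?_, fun i => Or.inl (harc i), ?_⟩
    · intro a b hab
      exact ZMod.val_injective m (hinjOn _ _ (ZMod.val_lt a) (ZMod.val_lt b) (Subtype.ext hab))
    · intro h
      have a0 := harc 0
      have a1 := harc 1
      have h11 : (1 : ZMod m) + 1 = 0 := by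
        have : ((2:ℕ) : ZMod m) = 0 := by rw [ZMod.natCast_eq_zero_iff, h]
        push_cast at this
        linear_combination this
      rw [zero_add] at a0
      rw [h11] at a1
      exact ⟨a0, a1⟩
  refine ⟨m, v, hcyc, heven, harc, ?_, fun i => (f^[i.val] p).2, ?_⟩
  · intro m' v' hv'
    exact Set.Subset.antisymm (aux_sub D hD m v hcyc m' v' hv') (aux_sub D hD m' v' hv' m v hcyc)
  · intro i
    simp only [v, hsucc]
    exact hf2 _
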